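/- arXiv:0812.4058 — 4 statements merged into one kernel-verified Lean document; each statement's English description precedes it below -/
import Mathlib

section
/- Let (V, m) be an n-ary Nambu-Lie algebra over a field K of characteristic zero and let ρ : V → V be an endomorphism of (V, m). Define m_ρ = ρ ∘ m. Then (V, m_ρ, (ρ, ..., ρ)) is an n-ary Hom-Nambu-Lie algebra: m_ρ is skew-symmetric and satisfies the n-ary Hom-Nambu identity with α_1 = ... = α_{n-1} = ρ. -/
/-! Apply `ρ` twice to the Hom-Nambu identity of `m`. The outer `ρ` becomes that of the outer
bracket `ρ ∘ m`; the inner one passes through `m` onto each argument, where it turns `m` into the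
inner bracket `ρ ∘ m` and `α_k` into `ρ ∘ α_k`. -/

open scoped BigOperators TensorProduct

/-- The argument vector `(x_1, …, x_{n-1}, v)` of length `n`. -/
def NambuArgs {V : Type*} {n : ℕ} (x : Fin (n - 1) → V) (v : V) : Fin n → V :=
  fun j => if h : (j : ℕ) < n - 1 then x ⟨j, h⟩ else v

/-- The `n`-ary Hom-Nambu identity for an `n`-linear map `m` with twisting
maps `α_1, …, α_{n-1}` (0-indexed here): for all `x_1, …, x_{n-1}` and `y_1, …, y_n`,
`m(α_1 x_1, …, α_{n-1} x_{n-1}, m(y_1, …, y_n))`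
`= Σ_{i=1}^{n} m(α_1 y_1, …, α_{i-1} y_{i-1}, m(x_1, …, x_{n-1}, y_i), α_i y_{i+1}, …, α_{n-1} y_n)`. -/
def HomNambuIdentity {K V : Type*} [Field K] [AddCommGroup V] [Module K V] {n : ℕ}
    (m : MultilinearMap K (fun _ : Fin n => V) V) (α : Fin (n - 1) → V →ₗ[K] V) : Prop :=
  ∀ (x : Fin (n - 1) → V) (y : Fin n → V),
    m (NambuArgs (fun k => α k (x k)) (m y)) =
      ∑ i : Fin n, m (fun j : Fin n =>
        if h : (j : ℕ) < (i : ℕ) then α ⟨j, by omega⟩ (y j)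
        else if h' : (j : ℕ) = (i : ℕ) then m (NambuArgs x (y i))
        else α ⟨(j : ℕ) - 1, by omega⟩ (y j))

/-- Skew-symmetry of an `n`-linear map:
`m(x_{σ(1)}, …, x_{σ(n)}) = sgn(σ) • m(x_1, …, x_n)`. -/
def SkewSymmetricMap {K V : Type*} [Field K] [AddCommGroup V] [Module K V] {n : ℕ}
    (m : MultilinearMap K (fun _ : Fin n => V) V) : Prop :=
  ∀ (σ : Equiv.Perm (Fin n)) (x : Fin n → V),
    m (x ∘ σ) = (Equiv.Perm.sign σ : ℤ) • m x

/-- `ρ` is an endomorphism of the `n`-ary algebra `(V, m)`. -/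
def IsNAryEndo {K V : Type*} [Field K] [AddCommGroup V] [Module K V] {n : ℕ}
    (m : MultilinearMap K (fun _ : Fin n => V) V) (ρ : V →ₗ[K] V) : Prop :=
  ∀ x : Fin n → V, ρ (m x) = m (fun i => ρ (x i))

section NambuInsert

variable {V W W' : Type*} {n : ℕ}

/-- The argument vector `(α_1 y_1, …, α_{i-1} y_{i-1}, v, α_i y_{i+1}, …, α_{n-1} y_n)` of the
`i`-th summand in the Hom-Nambu identity. The conditions are those of `HomNambuIdentity`, so that
the two agree definitionally. -/
def nambuInsert (α : Fin (n - 1) → V → W) (y : Fin n → V) (i : Fin n) (v : W) : Fin n → W :=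
  fun j =>
    if h : (j : ℕ) < (i : ℕ) then α ⟨j, by omega⟩ (y j)
    else if h' : (j : ℕ) = (i : ℕ) then v
    else α ⟨(j : ℕ) - 1, by omega⟩ (y j)

theorem comp_nambuArgs (f : V → W) (x : Fin (n - 1) → V) (v : V) :
    f ∘ NambuArgs x v = NambuArgs (f ∘ x) (f v) :=
  funext fun _ => apply_dite f _ _ _

theorem comp_nambuInsert (f : W → W') (α : Fin (n - 1) → V → W) (y : Fin n → V) (i : Fin n)
    (v : W) : f ∘ nambuInsert α y i v = nambuInsert (fun k => f ∘ α k) y i (f v) := by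
  funext j
  simp only [nambuInsert, Function.comp_apply, apply_dite f]

end NambuInsert

section Twist

variable {K V : Type*} [Field K] [AddCommGroup V] [Module K V] {n : ℕ}
  {m : MultilinearMap K (fun _ : Fin n => V) V} {α : Fin (n - 1) → V →ₗ[K] V} {ρ : V →ₗ[K] V}

theorem homNambuIdentity_iff_nambuInsert :
    HomNambuIdentity m α ↔ ∀ (x : Fin (n - 1) → V) (y : Fin n → V),
      m (NambuArgs (fun k => α k (x k)) (m y)) =
        ∑ i, m (nambuInsert (fun k => α k) y i (m (NambuArgs x (y i)))) :=
  Iff.rfl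

theorem SkewSymmetricMap.compMultilinearMap (hm : SkewSymmetricMap m) (ρ : V →ₗ[K] V) :
    SkewSymmetricMap (ρ.compMultilinearMap m) := fun σ x => by
  simp only [LinearMap.compMultilinearMap_apply, hm σ x, map_zsmul]

theorem IsNAryEndo.map_nambuArgs (hρ : IsNAryEndo m ρ) (x : Fin (n - 1) → V) (v : V) :
    ρ (m (NambuArgs x v)) = m (NambuArgs (ρ ∘ x) (ρ v)) :=
  (hρ _).trans (congrArg m (comp_nambuArgs ρ x v))

theorem IsNAryEndo.map_nambuInsert (hρ : IsNAryEndo m ρ) (β : Fin (n - 1) → V → V)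
    (y : Fin n → V) (i : Fin n) (v : V) :
    ρ (m (nambuInsert β y i v)) = m (nambuInsert (fun k => ρ ∘ β k) y i (ρ v)) :=
  (hρ _).trans (congrArg m (comp_nambuInsert ρ β y i v))

theorem HomNambuIdentity.compMultilinearMap (hm : HomNambuIdentity m α) (hρ : IsNAryEndo m ρ) :
    HomNambuIdentity (ρ.compMultilinearMap m) (fun k => ρ ∘ₗ α k) := by
  rw [homNambuIdentity_iff_nambuInsert] at hm ⊢
  intro x y
  calc
    ρ (m (NambuArgs (fun k => ρ (α k (x k))) (ρ (m y))))
      = ρ (ρ (m (NambuArgs (fun k => α k (x k)) (m y)))) :=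
        congrArg ρ (hρ.map_nambuArgs _ _).symm
    _ = ∑ i, ρ (ρ (m (nambuInsert (fun k => α k) y i (m (NambuArgs x (y i)))))) := by
        rw [hm, map_sum, map_sum]
    _ = ∑ i, ρ (m (nambuInsert (fun k => ρ ∘ α k) y i (ρ (m (NambuArgs x (y i)))))) := by
        simp only [hρ.map_nambuInsert]

theorem homNambuLie_of_nambuLie_endo_general (hskew : SkewSymmetricMap m)
    (hm : HomNambuIdentity m α) (hρ : IsNAryEndo m ρ) :
    SkewSymmetricMap (ρ.compMultilinearMap m) ∧
      HomNambuIdentity (ρ.compMultilinearMap m) (fun k => ρ ∘ₗ α k) :=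
  ⟨hskew.compMultilinearMap ρ, hm.compMultilinearMap hρ⟩

end Twist

/-- Twisting an `n`-ary Nambu-Lie algebra `(V, m)` by an endomorphism `ρ`
yields the `n`-ary Hom-Nambu-Lie algebra `(V, ρ ∘ m, (ρ, …, ρ))`: the twisted bracket is
skew-symmetric and satisfies the `n`-ary Hom-Nambu identity with all twisting maps equal to `ρ`. -/
theorem homNambuLie_of_nambuLie_endo {K V : Type*} [Field K] [CharZero K]
    [AddCommGroup V] [Module K V] {n : ℕ} (hn : 2 ≤ n)
    (m : MultilinearMap K (fun _ : Fin n => V) V)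
    (hskew : SkewSymmetricMap m)
    (hm : HomNambuIdentity m (fun _ => LinearMap.id))
    (ρ : V →ₗ[K] V) (hρ : IsNAryEndo m ρ) :
    SkewSymmetricMap (ρ.compMultilinearMap m) ∧
      HomNambuIdentity (ρ.compMultilinearMap m) (fun _ => ρ) :=
  homNambuLie_of_nambuLie_endo_general hskew hm hρ
end

section
/- Let (V, m) be an n-ary partially associative algebra over a field K of characteristic zero and let ρ : V → V be an endomorphism of (V, m). Define m_ρ = ρ ∘ m. Then (V, m_ρ, (ρ, ..., ρ)) is an n-ary partially Hom-associative algebra, i.e. m_ρ satisfies the n-ary partial Hom-associativity identity with α_1 = ... = α_{n-1} = ρ. -/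
/-!
Each term of the identity for `ρ ∘ m` is `ρ²` applied to the corresponding term for `m`: one factor
`ρ` is applied to every argument and is pulled out because `ρ` is an endomorphism, the other is the
outer `ρ` of `ρ ∘ m`. The same computation twists an algebra that is already Hom-associative, with
twisting maps `α_i`, into one with twisting maps `ρ ∘ α_i`; the theorem is the case `α_i = id`.
-/

open scoped BigOperators TensorProduct

/-- The argument vector of the `i`-th term of the Hom-associativity identities:
`(α_1 x_1, …, α_i x_i, m(x_{i+1}, …, x_{i+n}), α_{i+1} x_{i+1+n}, …, α_{n-1} x_{2n-1})`
(written here 0-indexed, with the inner `m` in slot `i`). -/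
def AssocArgs {K V : Type*} [Field K] [AddCommGroup V] [Module K V] {n : ℕ}
    (m : MultilinearMap K (fun _ : Fin n => V) V) (α : Fin (n - 1) → V →ₗ[K] V)
    (i : Fin n) (x : Fin (2 * n - 1) → V) : Fin n → V :=
  fun j =>
    if h : (j : ℕ) < (i : ℕ) then α ⟨j, by omega⟩ (x ⟨j, by omega⟩)
    else if h' : (j : ℕ) = (i : ℕ) then m (fun k : Fin n => x ⟨(i : ℕ) + (k : ℕ), by omega⟩)
    else α ⟨(j : ℕ) - 1, by omega⟩ (x ⟨(j : ℕ) + n - 1, by omega⟩)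

/-- The `n`-ary partial Hom-associativity identity. -/
def PartialHomAssociativity {K V : Type*} [Field K] [AddCommGroup V] [Module K V] {n : ℕ}
    (m : MultilinearMap K (fun _ : Fin n => V) V) (α : Fin (n - 1) → V →ₗ[K] V) : Prop :=
  ∀ x : Fin (2 * n - 1) → V, ∑ i : Fin n, m (AssocArgs m α i x) = 0

section Twist

variable {K V : Type*} [Field K] [AddCommGroup V] [Module K V] {n : ℕ}
  (m : MultilinearMap K (fun _ : Fin n => V) V) (α : Fin (n - 1) → V →ₗ[K] V) (ρ : V →ₗ[K] V)

theorem assocArgs_compMultilinearMap (i : Fin n) (x : Fin (2 * n - 1) → V) :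
    AssocArgs (ρ.compMultilinearMap m) (fun k => ρ ∘ₗ α k) i x =
      fun j => ρ (AssocArgs m α i x j) := by
  funext j
  unfold AssocArgs
  split_ifs <;> rfl

variable {m ρ}

theorem IsNAryEndo.compMultilinearMap_assocArgs (hρ : IsNAryEndo m ρ) (i : Fin n)
    (x : Fin (2 * n - 1) → V) :
    ρ.compMultilinearMap m (AssocArgs (ρ.compMultilinearMap m) (fun k => ρ ∘ₗ α k) i x) =
      ρ (ρ (m (AssocArgs m α i x))) := by
  rw [assocArgs_compMultilinearMap, LinearMap.compMultilinearMap_apply, ← hρ]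

variable {α}

theorem partiallyHomAssoc_of_partiallyAssoc_endo_general (hm : PartialHomAssociativity m α)
    (hρ : IsNAryEndo m ρ) :
    PartialHomAssociativity (ρ.compMultilinearMap m) (fun k => ρ ∘ₗ α k) := by
  intro x
  calc ∑ i, ρ.compMultilinearMap m (AssocArgs (ρ.compMultilinearMap m) (fun k => ρ ∘ₗ α k) i x)
    _ = ∑ i, ρ (ρ (m (AssocArgs m α i x))) :=
      Finset.sum_congr rfl fun i _ => hρ.compMultilinearMap_assocArgs α i x
    _ = ρ (ρ (∑ i, m (AssocArgs m α i x))) := by simp only [map_sum]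
    _ = 0 := by rw [hm x, map_zero, map_zero]

end Twist

/-- Twisting an `n`-ary partially associative algebra `(V, m)` by an
endomorphism `ρ` yields the `n`-ary partially Hom-associative algebra `(V, ρ ∘ m, (ρ, …, ρ))`. -/
theorem partiallyHomAssoc_of_partiallyAssoc_endo {K V : Type*} [Field K] [CharZero K]
    [AddCommGroup V] [Module K V] {n : ℕ} (hn : 2 ≤ n)
    (m : MultilinearMap K (fun _ : Fin n => V) V)
    (hm : PartialHomAssociativity m (fun _ => LinearMap.id))
    (ρ : V →ₗ[K] V) (hρ : IsNAryEndo m ρ) :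
    PartialHomAssociativity (ρ.compMultilinearMap m) (fun _ => ρ) :=
  partiallyHomAssoc_of_partiallyAssoc_endo_general hm hρ
end

section
/- Let A = K[x_1, x_2, x_3] be the polynomial algebra in three variables over a field K of characteristic zero, equipped with the functional Jacobian bracket [f_1, f_2, f_3] = det( (∂f_i/∂x_j)_{1 ≤ i,j ≤ 3} ). Let γ = (γ_1, γ_2, γ_3) be a triple of elements of A with det( (∂γ_i/∂x_j)_{1 ≤ i,j ≤ 3} ) = 1, let ρ_γ : A → A be the substitution homomorphism f ↦ f(γ_1, γ_2, γ_3), and define the twisted bracket [f_1, f_2, f_3]_γ = ρ_γ([f_1, f_2, f_3]). Then (A, [·,·,·]_γ, (ρ_γ, ρ_γ)) is a ternary Hom-Nambu-Lie algebra: [·,·,·]_γ is skew-symmetric and satisfies the ternary Hom-Nambu identity [ρ_γ(x_1), ρ_γ(x_2), [x_3, x_4, x_5]_γ]_γ = [[x_1, x_2, x_3]_γ, ρ_γ(x_4), ρ_γ(x_5)]_γ + [ρ_γ(x_3), [x_1, x_2, x_4]_γ, ρ_γ(x_5)]_γ + [ρ_γ(x_3), ρ_γ(x_4), [x_1, x_2,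 x_5]_γ]_γ for all x_1, ..., x_5 ∈ A. -/
/-!
The Nambu identity says that `D = [x₁, …, xₙ₋₁, ·]` is a derivation of the bracket `[y₁, …, yₙ]`,
and it holds for the Jacobian bracket of any finite family of commuting derivations `∂ⱼ`.
Indeed, for every vector field `D = ∑ aₖ ∂ₖ`, differentiating a Jacobian determinant row by row
shows that `D` fails to be a derivation of the bracket exactly by `div a • [y₁, …, yₙ]`. For
`D = [x₁, …, xₙ₋₁, ·]` the components `aₖ` are cofactors of a Jacobian matrix, and they have
divergence zero (the Piola identity) because second derivatives are symmetric while determinants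
are alternating.

By the chain rule, a substitution `ρ_γ` multiplies the bracket by the Jacobian determinant of `γ`.
When this is `1`, the twisted identity is `ρ_γ ∘ ρ_γ` applied to the Nambu identity.
-/

open scoped BigOperators

/-- The functional Jacobian bracket on `K[x₁,x₂,x₃]`:
`[f, g, h] = det((∂fᵢ/∂xⱼ))` where `(f₁,f₂,f₃) = (f,g,h)`. -/
noncomputable def jacBracket {K : Type*} [Field K]
    (f g h : MvPolynomial (Fin 3) K) : MvPolynomial (Fin 3) K :=
  Matrix.det (Matrix.of fun i j => MvPolynomial.pderiv j (![f, g, h] i))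

/-- The Jacobian matrix of a triple of polynomials in `K[x₁,x₂,x₃]`:
the `(i,j)` entry is `∂fᵢ/∂xⱼ`. -/
noncomputable def jacMatrix {K : Type*} [Field K]
    (f : Fin 3 → MvPolynomial (Fin 3) K) :
    Matrix (Fin 3) (Fin 3) (MvPolynomial (Fin 3) K) :=
  Matrix.of fun i j => MvPolynomial.pderiv j (f i)

/-- The twisted bracket `[f, g, h]_γ = ρ_γ([f, g, h])` on `K[x₁,x₂,x₃]`. -/
noncomputable def jacBracketTw {K : Type*} [Field K]
    (γ : Fin 3 → MvPolynomial (Fin 3) K) (f g h : MvPolynomial (Fin 3) K) :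
    MvPolynomial (Fin 3) K :=
  MvPolynomial.aeval γ (jacBracket f g h)

section Alternating

variable {A ι : Type*} [CommRing A] [Fintype ι]

lemma sum_sum_symm_mul_alternating_eq_zero {S B : ι → ι → A} (symm : ∀ k l, S k l = S l k)
    (alternating : ∀ k, B k k = 0) (antisymm : ∀ k l, B k l = -B l k) :
    ∑ k, ∑ l, S k l * B k l = 0 := by
  rw [← Fintype.sum_prod_type']
  refine Finset.sum_involution (fun p _ ↦ p.swap) (fun p _ ↦ ?_) (fun p _ hp hswap ↦ hp ?_)
    (fun _ _ ↦ Finset.mem_univ _) fun p _ ↦ p.swap_swap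
  · simp [symm p.2 p.1, antisymm p.2 p.1]
  · rw [← (Prod.ext_iff.1 hswap).1, Prod.fst_swap, alternating, mul_zero]

variable [DecidableEq ι]

lemma det_updateRow_eq_sum_mul_adjugate (M : Matrix ι ι A) (i : ι) (v : ι → A) :
    (M.updateRow i v).det = ∑ j, v j * M.adjugate j i := by
  rw [Matrix.det_eq_sum_mul_adjugate_row _ i]
  simp only [Matrix.adjugate_apply, Matrix.updateRow_self, Matrix.updateRow_idem]

lemma sum_det_updateRow_mul (M N : Matrix ι ι A) :
    ∑ i, (M.updateRow i ((M * N) i)).det = N.trace * M.det := by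
  calc ∑ i, (M.updateRow i ((M * N) i)).det
      = (M * N * M.adjugate).trace := by
        simp only [det_updateRow_eq_sum_mul_adjugate]
        rfl
    _ = (M.adjugate * M * N).trace := Matrix.trace_mul_cycle _ _ _
    _ = N.trace * M.det := by
        rw [Matrix.adjugate_mul, Matrix.smul_mul, one_mul, Matrix.trace_smul, smul_eq_mul, mul_comm]

lemma det_updateRow_updateRow_swap (M : Matrix ι ι A) {i j : ι} (hij : i ≠ j) (u v : ι → A) :
    ((M.updateRow i u).updateRow j v).det = -((M.updateRow i v).updateRow j u).det := by
  have rows_swapped : (M.updateRow i u).updateRow j v =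
      ((M.updateRow i v).updateRow j u).submatrix (Equiv.swap i j) id := by
    ext k l
    rcases eq_or_ne k i with rfl | hi
    · simp [hij]
    rcases eq_or_ne k j with rfl | hj
    · simp [hij]
    · simp [hi, hj, Equiv.swap_apply_of_ne_of_ne]
  rw [rows_swapped, Matrix.det_permute, Equiv.Perm.sign_swap hij]
  simp

lemma sum_sum_symm_mul_det_updateRow_single_eq_zero (M : Matrix ι ι A) {i j : ι} (hij : i ≠ j)
    {S : ι → ι → A} (symm : ∀ k l, S k l = S l k) :
    ∑ k, ∑ l, S k l * ((M.updateRow i (Pi.single k 1)).updateRow j (Pi.single l 1)).det = 0 :=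
  sum_sum_symm_mul_alternating_eq_zero symm
    (fun _ ↦ Matrix.det_zero_of_row_eq hij (by simp [hij]))
    fun _ _ ↦ det_updateRow_updateRow_swap M hij _ _

end Alternating

section Leibniz

variable {R A ι : Type*} [CommSemiring R] [DecidableEq ι]

lemma derivation_prod [CommSemiring A] [Algebra R A] (D : Derivation R A A) (s : Finset ι)
    (f : ι → A) :
    D (∏ i ∈ s, f i) = ∑ i ∈ s, ∏ j ∈ s, Function.update f i (D (f i)) j := by
  induction s using Finset.induction_on with
  | empty => simp
  | insert a s ha ih =>
    have update_at_a : ∏ j ∈ s, Function.update f a (D (f a)) j = ∏ j ∈ s, f j :=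
      Finset.prod_update_of_notMem ha _ _
    have update_in_s : ∀ i ∈ s, Function.update f i (D (f i)) a = f a := fun i hi ↦
      Function.update_of_ne (ne_of_mem_of_not_mem hi ha).symm _ _
    simp only [Finset.prod_insert ha, Finset.sum_insert ha, Derivation.leibniz, ih, smul_eq_mul,
      Function.update_self, update_at_a, Finset.mul_sum]
    rw [add_comm, mul_comm (D (f a))]
    exact congrArg _ (Finset.sum_congr rfl fun i hi ↦ by rw [update_in_s i hi])

lemma derivation_det [CommRing A] [Algebra R A] [Fintype ι] (D : Derivation R A A)
    (M : Matrix ι ι A) :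
    D M.det = ∑ i, (M.updateRow i fun j ↦ D (M i j)).det := by
  have det_eq (N : Matrix ι ι A) :
      N.det = ∑ σ : Equiv.Perm ι, (Equiv.Perm.sign σ : ℤ) • ∏ i, N i (σ i) := by
    rw [← Matrix.det_transpose, Matrix.det_apply]
    rfl
  have updateRow_diagonal (σ : Equiv.Perm ι) (i j : ι) :
      M.updateRow i (fun k ↦ D (M i k)) j (σ j) =
        Function.update (fun k ↦ M k (σ k)) i (D (M i (σ i))) j := by
    rcases eq_or_ne j i with rfl | hj
    · simp
    · simp [hj]
  simp only [det_eq, updateRow_diagonal, map_sum, map_zsmul, derivation_prod, Finset.smul_sum]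
  exact Finset.sum_comm

end Leibniz

section CommutingDerivations

variable {R A ι : Type*} [CommSemiring R] [CommRing A] [Algebra R A] (d : ι → Derivation R A A)

/-- The Jacobian matrix `(∂ⱼ fᵢ)` of a family `f` with respect to a family of derivations. -/
def jacobianMatrix (f : ι → A) : Matrix ι ι A :=
  Matrix.of fun i j ↦ d j (f i)

lemma jacobianMatrix_update [DecidableEq ι] (f : ι → A) (i : ι) (g : A) :
    jacobianMatrix d (Function.update f i g) = (jacobianMatrix d f).updateRow i fun j ↦ d j g := by
  ext k j
  rcases eq_or_ne k i with rfl | hk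
  · simp [jacobianMatrix]
  · simp [jacobianMatrix, hk]

variable [Fintype ι]

/-- The vector field `∑ aₖ ∂ₖ` with components `a`, as a derivation. -/
def vectorField (a : ι → A) : Derivation R A A :=
  ∑ k, a k • d k

lemma vectorField_apply (a : ι → A) (f : A) : vectorField d a f = ∑ k, a k * d k f := by
  rw [vectorField, ← Derivation.coeFnAddMonoidHom_apply, map_sum, Finset.sum_apply]
  rfl

/-- The divergence `∑ ∂ₖ aₖ` of the vector field with components `a`. -/
def divergence (a : ι → A) : A :=
  ∑ k, d k (a k)

variable [DecidableEq ι]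

/-- The Jacobian bracket `[f₁, …, fₙ] = det (∂ⱼ fᵢ)`, as a function of the family `f`; a single
argument is changed by `Function.update`. -/
def jacobianBracket (f : ι → A) : A :=
  (jacobianMatrix d f).det

lemma jacobianBracket_comp_perm (σ : Equiv.Perm ι) (f : ι → A) :
    jacobianBracket d (f ∘ σ) = (Equiv.Perm.sign σ : ℤ) • jacobianBracket d f := by
  rw [zsmul_eq_mul]
  exact Matrix.det_permute σ (jacobianMatrix d f)

lemma jacobianBracket_update_eq_vectorField (x : ι → A) (s : ι) (g : A) :
    jacobianBracket d (Function.update x s g) =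
      vectorField d (fun k ↦ (jacobianMatrix d x).adjugate k s) g := by
  simp only [jacobianBracket, jacobianMatrix_update, det_updateRow_eq_sum_mul_adjugate,
    vectorField_apply, mul_comm]

variable {d}

lemma sum_jacobianBracket_update_vectorField (hd : ∀ i j f, d i (d j f) = d j (d i f))
    (a y : ι → A) :
    ∑ i, jacobianBracket d (Function.update y i (vectorField d a (y i))) =
      vectorField d a (jacobianBracket d y) + divergence d a * jacobianBracket d y := by
  set M := jacobianMatrix d y with hM
  have row_eq (i : ι) : (fun j ↦ d j (vectorField d a (y i))) =
      (fun j ↦ vectorField d a (M i j)) + (M * jacobianMatrix d a) i := by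
    ext j
    simp only [vectorField_apply, map_sum, Derivation.leibniz, smul_eq_mul, hd j,
      Finset.sum_add_distrib, Pi.add_apply, Matrix.mul_apply]
    rfl
  simp only [jacobianBracket, jacobianMatrix_update, row_eq, Matrix.det_updateRow_add,
    Finset.sum_add_distrib, ← hM, sum_det_updateRow_mul, ← derivation_det]
  rfl

lemma divergence_adjugate_jacobianMatrix (hd : ∀ i j f, d i (d j f) = d j (d i f))
    (x : ι → A) (s : ι) :
    divergence d (fun k ↦ (jacobianMatrix d x).adjugate k s) = 0 := by
  set M := jacobianMatrix d x
  have d_adjugate (k : ι) : d k (M.adjugate k s) =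
      ∑ i, ∑ l, d k (M.updateRow s (Pi.single k 1) i l) *
        (M.updateRow s (Pi.single k 1)).adjugate l i := by
    rw [Matrix.adjugate_apply, derivation_det]
    exact Finset.sum_congr rfl fun i _ ↦ det_updateRow_eq_sum_mul_adjugate _ i _
  simp only [divergence, d_adjugate]
  rw [Finset.sum_comm]
  refine Finset.sum_eq_zero fun i _ ↦ ?_
  rcases eq_or_ne i s with rfl | his
  · have d_single (k l : ι) : d k (Pi.single (M := fun _ ↦ A) k 1 l) = 0 := by
      simp [Pi.single_apply, apply_ite]
    simp only [Matrix.updateRow_self, d_single, zero_mul, Finset.sum_const_zero]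
  · simp only [Matrix.updateRow_ne his, Matrix.adjugate_apply]
    exact sum_sum_symm_mul_det_updateRow_single_eq_zero M his.symm fun k l ↦ hd k l (x i)

theorem jacobianBracket_nambu (hd : ∀ i j f, d i (d j f) = d j (d i f)) (x y : ι → A) (s : ι) :
    jacobianBracket d (Function.update x s (jacobianBracket d y)) =
      ∑ i, jacobianBracket d
        (Function.update y i (jacobianBracket d (Function.update x s (y i)))) := by
  simp only [jacobianBracket_update_eq_vectorField d x s,
    sum_jacobianBracket_update_vectorField hd, divergence_adjugate_jacobianMatrix hd, zero_mul,
    add_zero]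

end CommutingDerivations

section Substitution

open MvPolynomial

lemma derivation_aeval {R S M σ : Type*} [CommSemiring R] [CommSemiring S] [Algebra R S]
    [AddCommMonoid M] [Module R M] [Module S M] [Fintype σ]
    (D : Derivation R S M) (γ : σ → S) (f : MvPolynomial σ R) :
    D (aeval γ f) = ∑ k, aeval γ (pderiv k f) • D (γ k) := by
  classical
  induction f using MvPolynomial.induction_on with
  | C a => simp [← MvPolynomial.algebraMap_eq]
  | add p q hp hq => simp only [map_add, hp, hq, add_smul, Finset.sum_add_distrib]
  | mul_X p i hp =>
    simp [hp, pderiv_X, Pi.single_apply, add_smul, Finset.sum_add_distrib, mul_smul, apply_ite,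
      Finset.smul_sum, ite_smul]

variable {R σ : Type*} [CommRing R]

lemma pderiv_pderiv_comm (i j : σ) (f : MvPolynomial σ R) :
    pderiv i (pderiv j f) = pderiv j (pderiv i f) := by
  classical
  have commutator_eq_zero : ⁅pderiv (R := R) i, pderiv (R := R) j⁆ = 0 :=
    derivation_ext fun k ↦ by
      simp [Derivation.commutator_apply, pderiv_X, Pi.single_apply, apply_ite]
  rw [← sub_eq_zero, ← Derivation.commutator_apply, commutator_eq_zero, Derivation.zero_apply]

variable [Fintype σ] [DecidableEq σ]

lemma jacobianMatrix_aeval (γ f : σ → MvPolynomial σ R) :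
    jacobianMatrix pderiv (aeval γ ∘ f) =
      (aeval γ).mapMatrix (jacobianMatrix pderiv f) * jacobianMatrix pderiv γ := by
  ext1 i j
  exact derivation_aeval (pderiv j) γ (f i)

lemma jacobianBracket_aeval (γ f : σ → MvPolynomial σ R) :
    jacobianBracket pderiv (aeval γ ∘ f) =
      aeval γ (jacobianBracket pderiv f) * jacobianBracket pderiv γ := by
  simp only [jacobianBracket, jacobianMatrix_aeval, Matrix.det_mul, AlgHom.map_det]

/-- The Jacobian bracket of polynomials followed by the substitution `ρ_γ`. -/
noncomputable def twistedJacobianBracket (γ f : σ → MvPolynomial σ R) : MvPolynomial σ R :=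
  aeval γ (jacobianBracket pderiv f)

theorem jacBracketTw_ternary_homNambuLie_general
    (γ : σ → MvPolynomial σ R) (hγ : jacobianBracket pderiv γ = 1) :
    (∀ (τ : Equiv.Perm σ) (f : σ → MvPolynomial σ R),
      twistedJacobianBracket γ (f ∘ τ) =
        (Equiv.Perm.sign τ : ℤ) • twistedJacobianBracket γ f) ∧
    ∀ (x y : σ → MvPolynomial σ R) (s : σ),
      twistedJacobianBracket γ
          (Function.update (aeval γ ∘ x) s (twistedJacobianBracket γ y)) =
        ∑ i, twistedJacobianBracket γ (Function.update (aeval γ ∘ y) i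
          (twistedJacobianBracket γ (Function.update x s (y i)))) := by
  have bracket_update_aeval (z : σ → MvPolynomial σ R) (i : σ) (g : MvPolynomial σ R) :
      jacobianBracket pderiv (Function.update (aeval γ ∘ z) i (aeval γ g)) =
        aeval γ (jacobianBracket pderiv (Function.update z i g)) := by
    rw [← Function.comp_update, jacobianBracket_aeval, hγ, mul_one]
  refine ⟨fun τ f ↦ ?_, fun x y s ↦ ?_⟩
  · simp only [twistedJacobianBracket, jacobianBracket_comp_perm, map_zsmul]
  · simp only [twistedJacobianBracket, bracket_update_aeval,
      jacobianBracket_nambu pderiv_pderiv_comm x y s, map_sum]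

end Substitution

lemma jacBracketTw_eq_twistedJacobianBracket {K : Type*} [Field K]
    (γ f : Fin 3 → MvPolynomial (Fin 3) K) :
    jacBracketTw γ (f 0) (f 1) (f 2) = twistedJacobianBracket γ f := by
  have vec_eq : ![f 0, f 1, f 2] = f := List.ofFn_injective rfl
  rw [jacBracketTw, jacBracket, vec_eq]
  rfl

/-- If `γ = (γ₁,γ₂,γ₃)` has Jacobian determinant `1`, then
`(K[x₁,x₂,x₃], [·,·,·]_γ, (ρ_γ, ρ_γ))` is a ternary Hom-Nambu-Lie algebra: the twisted
bracket `[·,·,·]_γ = ρ_γ ∘ [·,·,·]` is skew-symmetric and satisfies the ternary Hom-Nambu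
identity with both twisting maps equal to `ρ_γ`. -/
theorem jacBracketTw_ternary_homNambuLie {K : Type*} [Field K] [CharZero K]
    (γ : Fin 3 → MvPolynomial (Fin 3) K) (hγ : (jacMatrix γ).det = 1) :
    (∀ (σ : Equiv.Perm (Fin 3)) (f : Fin 3 → MvPolynomial (Fin 3) K),
        jacBracketTw γ (f (σ 0)) (f (σ 1)) (f (σ 2)) =
          (Equiv.Perm.sign σ : ℤ) • jacBracketTw γ (f 0) (f 1) (f 2)) ∧
      (∀ x₁ x₂ x₃ x₄ x₅ : MvPolynomial (Fin 3) K,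
        jacBracketTw γ (MvPolynomial.aeval γ x₁) (MvPolynomial.aeval γ x₂)
            (jacBracketTw γ x₃ x₄ x₅) =
          jacBracketTw γ (jacBracketTw γ x₁ x₂ x₃) (MvPolynomial.aeval γ x₄)
              (MvPolynomial.aeval γ x₅) +
            jacBracketTw γ (MvPolynomial.aeval γ x₃) (jacBracketTw γ x₁ x₂ x₄)
              (MvPolynomial.aeval γ x₅) +
            jacBracketTw γ (MvPolynomial.aeval γ x₃) (MvPolynomial.aeval γ x₄)
              (jacBracketTw γ x₁ x₂ x₅)) := by
  obtain ⟨skew, nambu⟩ := jacBracketTw_ternary_homNambuLie_general γ hγ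
  simp only [← jacBracketTw_eq_twistedJacobianBracket] at skew nambu
  refine ⟨skew, fun x₁ x₂ x₃ x₄ x₅ ↦ ?_⟩
  simpa [Fin.sum_univ_three, Function.update_apply] using nambu ![x₁, x₂, 0] ![x₃, x₄, x₅] 2
end

section
/- Let (V, m, (α_1, ..., α_{n-1})) be an n-ary totally Hom-associative algebra over a field K of characteristic zero with m symmetric, and let (V', m', (α'_1, ..., α'_{n-1})) be an n-ary Hom-Lie algebra. Let M : (V ⊗ V')^n → V ⊗ V' be an n-linear map satisfying M(x_1 ⊗ x'_1, ..., x_n ⊗ x'_n) = m(x_1, ..., x_n) ⊗ m'(x'_1, ..., x'_n) on pure tensors, and set β_i = α_i ⊗ α'_i for i = 1, ..., n-1. Then (V ⊗ V', M, (β_1, ..., β_{n-1})) is an n-ary Hom-Lie algebra: M is skew-symmetric and satisfies the n-ary Hom-Jacobi identity with respect to (β_1, ..., β_{n-1}). -/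
/-!
Write `F_i(x) = m(α_1 x_1, …, α_i x_i, m(x_{i+1}, …, x_{i+n}), α_{i+1} x_{i+1+n}, …)`. Total
Hom-associativity says that `F_i` does not depend on `i`, and symmetry of the inner `m` makes it
invariant under permutations of the window `i + 1, …, i + n`. Every two adjacent indices lie in a
common window, so `F = F_i` is invariant under all of `S_{2n-1}`.

The Hom-Jacobi identity says that the alternatization of `F_{n-1}` vanishes. On pure tensors the
alternatization for `M` is `Σ_σ sgn(σ) F(x ∘ σ) ⊗ F'(x' ∘ σ) = F(x) ⊗ Σ_σ sgn(σ) F'(x' ∘ σ)`, with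
`F'` the analogue of `F` for `m'`, and the last sum is zero. Multilinearity extends this from pure
tensors to all tensors.
-/

open scoped BigOperators TensorProduct

/-- The `n`-ary total Hom-associativity identity. -/
def TotalHomAssociativity {K V : Type*} [Field K] [AddCommGroup V] [Module K V] {n : ℕ}
    (m : MultilinearMap K (fun _ : Fin n => V) V) (α : Fin (n - 1) → V →ₗ[K] V) : Prop :=
  ∀ (i j : Fin n), i < j → ∀ x : Fin (2 * n - 1) → V,
    m (AssocArgs m α i x) = m (AssocArgs m α j x)

/-- Symmetry of an `n`-linear map: `m(x_{σ(1)}, …, x_{σ(n)}) = m(x_1, …, x_n)`. -/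
def SymmetricMap {K V : Type*} [Field K] [AddCommGroup V] [Module K V] {n : ℕ}
    (m : MultilinearMap K (fun _ : Fin n => V) V) : Prop :=
  ∀ (σ : Equiv.Perm (Fin n)) (x : Fin n → V), m (x ∘ σ) = m x

/-- The `n`-ary Hom-Jacobi identity:
`Σ_{σ ∈ S_{2n-1}} sgn(σ) m(α_1(x_{σ(1)}), …, α_{n-1}(x_{σ(n-1)}), m(x_{σ(n)}, …, x_{σ(2n-1)})) = 0`. -/
def HomJacobiIdentity {K V : Type*} [Field K] [AddCommGroup V] [Module K V] {n : ℕ}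
    (m : MultilinearMap K (fun _ : Fin n => V) V) (α : Fin (n - 1) → V →ₗ[K] V) : Prop :=
  ∀ x : Fin (2 * n - 1) → V,
    ∑ σ : Equiv.Perm (Fin (2 * n - 1)), (Equiv.Perm.sign σ : ℤ) •
      m (fun j : Fin n =>
        if h : (j : ℕ) < n - 1 then α ⟨j, h⟩ (x (σ ⟨j, by omega⟩))
        else m (fun k : Fin n => x (σ ⟨n - 1 + (k : ℕ), by omega⟩))) = 0

section General

variable {R ι V V' W W' : Type*}

lemma multilinearMap_ext_tmul [CommSemiring R] [AddCommMonoid V] [Module R V]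
    [AddCommMonoid V'] [Module R V'] [AddCommMonoid W] [Module R W] [Finite ι]
    {f g : MultilinearMap R (fun _ : ι => V ⊗[R] V') W}
    (h : ∀ (x : ι → V) (x' : ι → V'),
      f (fun i => x i ⊗ₜ[R] x' i) = g (fun i => x i ⊗ₜ[R] x' i)) : f = g := by
  have hspan : Submodule.span R (Set.range fun p : V × V' => p.1 ⊗ₜ[R] p.2) = ⊤ := by
    rw [← TensorProduct.span_tmul_eq_top]
    congr 1
    ext t
    simp
  exact MultilinearMap.ext_of_span_eq_top (fun _ => hspan)
    fun p => h (fun i => (p i).1) (fun i => (p i).2)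

lemma alternatization_tmul [CommRing R] [AddCommGroup V] [Module R V] [AddCommGroup V']
    [Module R V'] [AddCommGroup W] [Module R W] [AddCommGroup W'] [Module R W']
    [Fintype ι] [DecidableEq ι] {f : MultilinearMap R (fun _ : ι => V ⊗[R] V') (W ⊗[R] W')}
    {g : MultilinearMap R (fun _ : ι => V) W} {h : MultilinearMap R (fun _ : ι => V') W'}
    (hf : ∀ x x', f (fun i => x i ⊗ₜ[R] x' i) = g x ⊗ₜ[R] h x')
    (hg : ∀ (σ : Equiv.Perm ι) x, g (x ∘ σ) = g x) (x : ι → V) (x' : ι → V') :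
    f.alternatization (fun i => x i ⊗ₜ[R] x' i) = g x ⊗ₜ[R] h.alternatization x' := by
  simp only [MultilinearMap.alternatization_apply, MultilinearMap.domDomCongr_apply,
    TensorProduct.tmul_sum, Units.smul_def, TensorProduct.tmul_smul, hf]
  refine Finset.sum_congr rfl fun σ _ => ?_
  rw [← hg σ x]
  rfl

lemma comp_perm_eq_of_comp_adjacent_swap_eq {X Y : Type*} {N : ℕ} {f : (Fin N → X) → Y}
    (hf : ∀ a b : Fin N, (b : ℕ) = a + 1 → ∀ x, f (x ∘ Equiv.swap a b) = f x)
    (σ : Equiv.Perm (Fin N)) (x : Fin N → X) : f (x ∘ σ) = f x := by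
  cases N with
  | zero => rw [Subsingleton.elim σ 1, Equiv.Perm.coe_one, Function.comp_id]
  | succ N =>
    have hσ : σ ∈ Submonoid.closure
        (Set.range fun i : Fin N => Equiv.swap i.castSucc i.succ) := by
      rw [Equiv.Perm.mclosure_swap_castSucc_succ]
      exact Submonoid.mem_top σ
    induction hσ using Submonoid.closure_induction generalizing x with
    | mem s hs =>
      obtain ⟨i, rfl⟩ := hs
      exact hf _ _ (by simp) x
    | one => rfl
    | mul s t _ _ hs ht => rw [Equiv.Perm.coe_mul, ← Function.comp_assoc, ht, hs]

end General

section HomAlgebra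

variable {K V : Type*} [Field K] [AddCommGroup V] [Module K V] {n : ℕ}
  {m : MultilinearMap K (fun _ : Fin n => V) V} {α : Fin (n - 1) → V →ₗ[K] V}

lemma assocArgs_update_of_lt {i : Fin n} {p : Fin (2 * n - 1)} (hp : (p : ℕ) < i)
    (x : Fin (2 * n - 1) → V) (c : V) :
    AssocArgs m α i (Function.update x p c) =
      Function.update (AssocArgs m α i x) ⟨p, by omega⟩ (α ⟨p, by omega⟩ c) := by
  funext j
  simp only [AssocArgs, Function.update_apply, Fin.ext_iff]
  grind

lemma assocArgs_update_of_mem_window {i : Fin n} {p : Fin (2 * n - 1)} (hip : (i : ℕ) ≤ p)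
    (hpi : (p : ℕ) < i + n) (x : Fin (2 * n - 1) → V) (c : V) :
    AssocArgs m α i (Function.update x p c) =
      Function.update (AssocArgs m α i x) i
        (m (Function.update (fun k => x ⟨i + k, by omega⟩) ⟨p - i, by omega⟩ c)) := by
  have hwindow : (fun k : Fin n => Function.update x p c ⟨i + k, by omega⟩) =
      Function.update (fun k : Fin n => x ⟨i + k, by omega⟩) ⟨p - i, by omega⟩ c := by
    funext k
    simp only [Function.update_apply, Fin.ext_iff]
    grind
  funext j
  rw [Function.update_apply]
  simp only [AssocArgs, hwindow, Fin.ext_iff]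
  grind

lemma assocArgs_update_of_ge {i : Fin n} {p : Fin (2 * n - 1)} (hp : (i : ℕ) + n ≤ p)
    (x : Fin (2 * n - 1) → V) (c : V) :
    AssocArgs m α i (Function.update x p c) =
      Function.update (AssocArgs m α i x) ⟨p + 1 - n, by omega⟩ (α ⟨p - n, by omega⟩ c) := by
  funext j
  simp only [AssocArgs, Function.update_apply, Fin.ext_iff]
  grind

lemma exists_assocArgs_update_eq (m : MultilinearMap K (fun _ : Fin n => V) V)
    (α : Fin (n - 1) → V →ₗ[K] V) (i : Fin n) (x : Fin (2 * n - 1) → V) (p : Fin (2 * n - 1)) :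
    ∃ (j : Fin n) (L : V →ₗ[K] V), ∀ c,
      AssocArgs m α i (Function.update x p c) = Function.update (AssocArgs m α i x) j (L c) := by
  obtain hpi | hip := lt_or_ge (p : ℕ) i
  · exact ⟨_, α _, assocArgs_update_of_lt hpi x⟩
  obtain hpi | hip' := lt_or_ge (p : ℕ) (i + n)
  · exact ⟨i, m.toLinearMap _ _, assocArgs_update_of_mem_window hip hpi x⟩
  · exact ⟨_, α _, assocArgs_update_of_ge hip' x⟩

/-- The `(2n - 1)`-linear map
`x ↦ m(α_1 x_1, …, α_i x_i, m(x_{i+1}, …, x_{i+n}), α_{i+1} x_{i+1+n}, …, α_{n-1} x_{2n-1})`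
compared for different `i` in total Hom-associativity, with the inner `m` in the 0-indexed slot
`i`. The slot `i = n - 1` is the one of the Hom-Jacobi identity. -/
def homAssocProduct (m : MultilinearMap K (fun _ : Fin n => V) V)
    (α : Fin (n - 1) → V →ₗ[K] V) (i : Fin n) :
    MultilinearMap K (fun _ : Fin (2 * n - 1) => V) V :=
  MultilinearMap.mk' (fun x => m (AssocArgs m α i x))
    (fun x p a b => by
      obtain ⟨j, L, hL⟩ := exists_assocArgs_update_eq m α i x p
      simp only [hL, map_add, MultilinearMap.map_update_add])
    (fun x p c a => by
      obtain ⟨j, L, hL⟩ := exists_assocArgs_update_eq m α i x p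
      simp only [hL, map_smul, MultilinearMap.map_update_smul])

lemma homAssocProduct_apply (i : Fin n) (x : Fin (2 * n - 1) → V) :
    homAssocProduct m α i x = m (AssocArgs m α i x) :=
  rfl

lemma TotalHomAssociativity.homAssocProduct_eq (hm : TotalHomAssociativity m α) (i j : Fin n) :
    homAssocProduct m α i = homAssocProduct m α j := by
  ext x
  obtain hij | rfl | hij := lt_trichotomy i j
  · exact hm i j hij x
  · rfl
  · exact (hm j i hij x).symm

lemma SymmetricMap.assocArgs_comp_swap (hsym : SymmetricMap m) {i : Fin n}
    {a b : Fin (2 * n - 1)} (hia : (i : ℕ) ≤ a) (hai : (a : ℕ) < i + n) (hib : (i : ℕ) ≤ b)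
    (hbi : (b : ℕ) < i + n) (x : Fin (2 * n - 1) → V) :
    AssocArgs m α i (x ∘ Equiv.swap a b) = AssocArgs m α i x := by
  have houtside (q : Fin (2 * n - 1)) (hq : (q : ℕ) < i ∨ i + n ≤ (q : ℕ)) :
      (x ∘ Equiv.swap a b) q = x q := by
    rw [Function.comp_apply, Equiv.swap_apply_of_ne_of_ne] <;> rw [Ne, Fin.ext_iff] <;> omega
  have hinside (k : Fin n) : Equiv.swap a b ⟨i + k, by omega⟩ =
      ⟨i + Equiv.swap (⟨a - i, by omega⟩ : Fin n) ⟨b - i, by omega⟩ k, by omega⟩ := by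
    simp only [Equiv.swap_apply_def, Fin.ext_iff]
    grind
  funext j
  unfold AssocArgs
  split_ifs with hji hji'
  · rw [houtside _ (.inl hji)]
  · simp only [Function.comp_apply, hinside]
    exact hsym _ (fun k => x ⟨i + k, by omega⟩)
  · rw [houtside _ (.inr (by grind))]

lemma SymmetricMap.homAssocProduct (hsym : SymmetricMap m) (hm : TotalHomAssociativity m α)
    (i : Fin n) : SymmetricMap (homAssocProduct m α i) := by
  refine comp_perm_eq_of_comp_adjacent_swap_eq fun a b hab x => ?_
  -- The inner product may be moved to a slot whose window contains both `a` and `b = a + 1`.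
  let j : Fin n := ⟨min a (n - 1), by omega⟩
  rw [hm.homAssocProduct_eq i j, homAssocProduct_apply, homAssocProduct_apply,
    hsym.assocArgs_comp_swap] <;> simp only [j] <;> omega

lemma homJacobiIdentity_iff_alternatization_eq_zero (hn : 0 < n) :
    HomJacobiIdentity m α ↔ (homAssocProduct m α ⟨n - 1, by omega⟩).alternatization = 0 := by
  have hargs (y : Fin (2 * n - 1) → V) : AssocArgs m α ⟨n - 1, by omega⟩ y = fun j : Fin n =>
      if h : (j : ℕ) < n - 1 then α ⟨j, h⟩ (y ⟨j, by omega⟩)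
      else m fun k : Fin n => y ⟨n - 1 + k, by omega⟩ := by
    funext j
    simp only [AssocArgs]
    grind
  simp only [HomJacobiIdentity, AlternatingMap.ext_iff, MultilinearMap.alternatization_apply,
    MultilinearMap.domDomCongr_apply, homAssocProduct_apply, hargs, Units.smul_def,
    AlternatingMap.zero_apply]

end HomAlgebra

section Tensor

variable {K V V' : Type*} [Field K] [AddCommGroup V] [Module K V] [AddCommGroup V'] [Module K V']
  {n : ℕ} {m : MultilinearMap K (fun _ : Fin n => V) V}
  {m' : MultilinearMap K (fun _ : Fin n => V') V'}
  {M : MultilinearMap K (fun _ : Fin n => V ⊗[K] V') (V ⊗[K] V')}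

lemma SkewSymmetricMap.of_tmul (hsym : SymmetricMap m) (hskew : SkewSymmetricMap m')
    (hM : ∀ x x', M (fun i => x i ⊗ₜ[K] x' i) = m x ⊗ₜ[K] m' x') : SkewSymmetricMap M := by
  intro σ
  have h : M.domDomCongr σ = (Equiv.Perm.sign σ : ℤ) • M := by
    refine multilinearMap_ext_tmul fun x x' => ?_
    calc M (fun i => x (σ i) ⊗ₜ[K] x' (σ i))
        = m (x ∘ σ) ⊗ₜ[K] m' (x' ∘ σ) := hM _ _
      _ = (Equiv.Perm.sign σ : ℤ) • (m x ⊗ₜ[K] m' x') := by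
        rw [hsym, hskew, TensorProduct.tmul_smul]
      _ = ((Equiv.Perm.sign σ : ℤ) • M) (fun i => x i ⊗ₜ[K] x' i) := by
        rw [smul_apply, hM]
  exact fun x => DFunLike.congr_fun h x

lemma homAssocProduct_tmul (hM : ∀ x x', M (fun i => x i ⊗ₜ[K] x' i) = m x ⊗ₜ[K] m' x')
    (α : Fin (n - 1) → V →ₗ[K] V) (α' : Fin (n - 1) → V' →ₗ[K] V') (i : Fin n)
    (x : Fin (2 * n - 1) → V) (x' : Fin (2 * n - 1) → V') :
    homAssocProduct M (fun k => TensorProduct.map (α k) (α' k)) i (fun p => x p ⊗ₜ[K] x' p) =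
      homAssocProduct m α i x ⊗ₜ[K] homAssocProduct m' α' i x' := by
  simp only [homAssocProduct_apply, ← hM]
  congr 1
  funext j
  simp only [AssocArgs, hM, TensorProduct.map_tmul]
  split_ifs <;> rfl

end Tensor

theorem tensor_totallyHomAssoc_homLie_general {K V V' : Type*} [Field K]
    [AddCommGroup V] [Module K V] [AddCommGroup V'] [Module K V']
    {n : ℕ} (hn : 0 < n)
    (m : MultilinearMap K (fun _ : Fin n => V) V)
    (m' : MultilinearMap K (fun _ : Fin n => V') V')
    (α : Fin (n - 1) → V →ₗ[K] V) (α' : Fin (n - 1) → V' →ₗ[K] V')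
    (hsym : SymmetricMap m) (hm : TotalHomAssociativity m α)
    (hskew' : SkewSymmetricMap m') (hm' : HomJacobiIdentity m' α')
    (M : MultilinearMap K (fun _ : Fin n => V ⊗[K] V') (V ⊗[K] V'))
    (hM : ∀ (x : Fin n → V) (x' : Fin n → V'),
      M (fun i => x i ⊗ₜ[K] x' i) = m x ⊗ₜ[K] m' x') :
    SkewSymmetricMap M ∧
      HomJacobiIdentity M (fun i => TensorProduct.map (α i) (α' i)) := by
  refine ⟨.of_tmul hsym hskew' hM, ?_⟩
  rw [homJacobiIdentity_iff_alternatization_eq_zero hn] at hm' ⊢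
  refine AlternatingMap.coe_multilinearMap_injective (multilinearMap_ext_tmul fun x x' => ?_)
  have h := alternatization_tmul (homAssocProduct_tmul hM α α' ⟨n - 1, by omega⟩)
    (hsym.homAssocProduct hm _) x x'
  rwa [hm', AlternatingMap.zero_apply, TensorProduct.tmul_zero] at h

/-- The tensor product of a symmetric `n`-ary totally Hom-associative
algebra `(V, m, (α_i))` and an `n`-ary Hom-Lie algebra `(V', m', (α'_i))` is an `n`-ary
Hom-Lie algebra `(V ⊗ V', M, (α_i ⊗ α'_i))`: `M` is skew-symmetric and satisfies the
`n`-ary Hom-Jacobi identity. -/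
theorem tensor_totallyHomAssoc_homLie {K V V' : Type*} [Field K] [CharZero K]
    [AddCommGroup V] [Module K V] [AddCommGroup V'] [Module K V']
    {n : ℕ} (hn : 2 ≤ n)
    (m : MultilinearMap K (fun _ : Fin n => V) V)
    (m' : MultilinearMap K (fun _ : Fin n => V') V')
    (α : Fin (n - 1) → V →ₗ[K] V) (α' : Fin (n - 1) → V' →ₗ[K] V')
    (hsym : SymmetricMap m) (hm : TotalHomAssociativity m α)
    (hskew' : SkewSymmetricMap m') (hm' : HomJacobiIdentity m' α')
    (M : MultilinearMap K (fun _ : Fin n => V ⊗[K] V') (V ⊗[K] V'))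
    (hM : ∀ (x : Fin n → V) (x' : Fin n → V'),
      M (fun i => x i ⊗ₜ[K] x' i) = m x ⊗ₜ[K] m' x') :
    SkewSymmetricMap M ∧
      HomJacobiIdentity M (fun i => TensorProduct.map (α i) (α' i)) :=
  tensor_totallyHomAssoc_homLie_general (by omega) m m' α α' hsym hm hskew' hm' M hM
end
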